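/- Convergence to a stationary point without VGD: suppose f⋆ := min_{x∈X} f(x) > −∞ and: (i) each local regularizer R_x is 1-strongly convex with an L-Lipschitz gradient w.r.t. ‖·‖_x; (ii) max_{u,v∈X} ‖u − v‖_x ≤ D and ‖∇f(x)‖_x* ≤ M for all x ∈ X; (iii) f is β-locally smooth w.r.t. x ↦ ‖·‖_x. Run the exact Bregman proximal point method with η = 1/(2β): x_{k+1} := argmin_{y∈X} { ⟨∇f(x_k), y⟩ + (1/η) B_{R_{x_k}}(y, x_k) } for k = 1,…,K. Then there exists k⋆ ∈ {1,…,K} such that for every y ∈ X: ⟨∇f(x_{k⋆}), y − x_{k⋆}⟩ ≥ − 2 (D + ηM) L √(β (f(x₁) − f⋆)) / √K. -/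

import Mathlib

open scoped BigOperators

noncomputable section

/-- Standard inner product on `ℝ^d`. -/
def dotd {d : ℕ} (u v : Fin d → ℝ) : ℝ := ∑ i, u i * v i

/-- `N` is a norm on `ℝ^d`. -/
def IsNorm {d : ℕ} (N : (Fin d → ℝ) → ℝ) : Prop :=
  (∀ x, 0 ≤ N x) ∧ (∀ x, N x = 0 ↔ x = 0) ∧
    (∀ (c : ℝ) (x : Fin d → ℝ), N (c • x) = |c| * N x) ∧ ∀ x y, N (x + y) ≤ N x + N y

/-- The dual norm of `N`. -/
def dualNorm {d : ℕ} (N : (Fin d → ℝ) → ℝ) (z : Fin d → ℝ) : ℝ :=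
  sSup ((fun u => dotd z u) '' {u | N u ≤ 1})

/-- Bregman divergence of `h` whose gradient is `gh`. -/
def breg {d : ℕ} (h : (Fin d → ℝ) → ℝ) (gh : (Fin d → ℝ) → Fin d → ℝ)
    (u v : Fin d → ℝ) : ℝ :=
  h u - h v - dotd (gh v) (u - v)

/-- Bregman gradient mapping `G_η(x, x⁺; h) = (1/η)(∇h(x) − ∇h(x⁺))`. -/
def Gmap {d : ℕ} (gh : (Fin d → ℝ) → Fin d → ℝ) (η : ℝ) (x xp : Fin d → ℝ) :
    Fin d → ℝ :=
  (1 / η) • (gh x - gh xp)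

/-- The set `T_η^{εopt}(x; h)` of `εopt`-approximate Bregman proximal updates at `x`,
for gradient estimate `g = ĝ(x)`. -/
def proxSet {d : ℕ} (X : Set (Fin d → ℝ)) (g : Fin d → ℝ)
    (gh : (Fin d → ℝ) → Fin d → ℝ) (η εopt : ℝ) (x : Fin d → ℝ) :
    Set (Fin d → ℝ) :=
  {xp | xp ∈ X ∧ ∀ z ∈ X, dotd (g + (1 / η) • (gh xp - gh x)) (z - xp) ≥ -εopt}

/-!
Minimality of a step along segments of `X`, together with Lipschitz continuity of `∇R`, gives the
variational inequality `⟨g + (1/η)(∇R(x⁺) - ∇R(x)), y - x⁺⟩ ≥ 0`. At `y = x`, strong convexity and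
smoothness turn it into the descent `‖x⁺ - x‖² / (2η) ≤ f(x) - f(x⁺)`, so telescoping yields an
iteration with a short step. At a general `y`, the dual-norm inequality bounds `-⟨g, y - x⟩` by
`(1/η)(D + ηM) L ‖x⁺ - x‖`; absorbing the gradient term into the factor `L` is possible because
strong convexity forces `1 ≤ L` unless `X` is a point.
-/

section DotProduct

variable {d : ℕ}

theorem dotd_zero (u : Fin d → ℝ) : dotd u 0 = 0 := dotProduct_zero u

theorem dotd_smul (c : ℝ) (u v : Fin d → ℝ) : dotd u (c • v) = c * dotd u v :=
  dotProduct_smul c u v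

theorem smul_dotd (c : ℝ) (u v : Fin d → ℝ) : dotd (c • u) v = c * dotd u v :=
  smul_dotProduct c u v

theorem dotd_sub (u v w : Fin d → ℝ) : dotd u (v - w) = dotd u v - dotd u w :=
  dotProduct_sub u v w

theorem sub_dotd (u v w : Fin d → ℝ) : dotd (u - v) w = dotd u w - dotd v w :=
  sub_dotProduct u v w

theorem add_dotd (u v w : Fin d → ℝ) : dotd (u + v) w = dotd u w + dotd v w :=
  add_dotProduct u v w

end DotProduct

section DualNorm

theorem exists_forall_le_mul_of_definite_seminorm {E : Type*} [AddCommGroup E] [Module ℝ E]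
    [FiniteDimensional ℝ E] (p : Seminorm ℝ E) (hp : ∀ u, p u = 0 → u = 0) (φ : E →ₗ[ℝ] ℝ) :
    ∃ C : ℝ, 0 ≤ C ∧ ∀ u, φ u ≤ C * p u := by
  let : Norm E := ⟨p⟩
  have core : NormedSpace.Core ℝ E :=
    { norm_nonneg := apply_nonneg p
      norm_smul := map_smul_eq_mul p
      norm_triangle := map_add_le_add p
      norm_eq_zero_iff := fun u => ⟨hp u, fun hu => hu ▸ map_zero p⟩ }
  let : NormedAddCommGroup E := NormedAddCommGroup.ofCore core
  let : NormedSpace ℝ E := NormedSpace.ofCore core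
  exact ⟨‖φ.toContinuousLinearMap‖, norm_nonneg _,
    fun u => (le_abs_self _).trans (φ.toContinuousLinearMap.le_opNorm u)⟩

namespace IsNorm

variable {d : ℕ} {N : (Fin d → ℝ) → ℝ}

theorem nonneg (h : IsNorm N) (u : Fin d → ℝ) : 0 ≤ N u := h.1 u

theorem map_zero (h : IsNorm N) : N 0 = 0 := (h.2.1 0).2 rfl

theorem map_smul (h : IsNorm N) (c : ℝ) (u : Fin d → ℝ) : N (c • u) = |c| * N u := h.2.2.1 c u

theorem pos (h : IsNorm N) {u : Fin d → ℝ} (hu : u ≠ 0) : 0 < N u :=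
  (h.nonneg u).lt_of_ne' (mt (h.2.1 u).1 hu)

theorem map_sub_rev (h : IsNorm N) (u v : Fin d → ℝ) : N (u - v) = N (v - u) := by
  simpa using h.map_smul (-1) (v - u)

theorem bddAbove_dotd_image_unitBall (h : IsNorm N) (z : Fin d → ℝ) :
    BddAbove ((fun u => dotd z u) '' {u | N u ≤ 1}) := by
  obtain ⟨C, hC, hbound⟩ := exists_forall_le_mul_of_definite_seminorm
    (Seminorm.of N h.2.2.2 h.map_smul) (fun u => (h.2.1 u).1) (dotProductBilin ℝ ℝ z)
  refine ⟨C, ?_⟩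
  rintro _ ⟨u, hu, rfl⟩
  exact (hbound u).trans (mul_le_of_le_one_right hC hu)

theorem dualNorm_nonneg (h : IsNorm N) (z : Fin d → ℝ) : 0 ≤ dualNorm N z :=
  le_csSup (h.bddAbove_dotd_image_unitBall z)
    ⟨0, h.map_zero.trans_le zero_le_one, dotd_zero z⟩

theorem dotd_le_dualNorm_mul (h : IsNorm N) (z u : Fin d → ℝ) :
    dotd z u ≤ dualNorm N z * N u := by
  rcases eq_or_ne u 0 with rfl | hu
  · rw [dotd_zero, h.map_zero, mul_zero]
  have hpos : 0 < N u := h.pos hu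
  have hunit : N ((N u)⁻¹ • u) ≤ 1 := by
    rw [h.map_smul, abs_of_pos (inv_pos.2 hpos), inv_mul_cancel₀ hpos.ne']
  have hscaled : (N u)⁻¹ * dotd z u ≤ dualNorm N z :=
    le_csSup (h.bddAbove_dotd_image_unitBall z) ⟨_, hunit, dotd_smul _ z u⟩
  rwa [inv_mul_le_iff₀' hpos] at hscaled

end IsNorm

end DualNorm

section Bregman

variable {d : ℕ} {N : (Fin d → ℝ) → ℝ} {X : Set (Fin d → ℝ)} {h : (Fin d → ℝ) → ℝ}
  {gh : (Fin d → ℝ) → Fin d → ℝ} {L : ℝ}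

theorem breg_sub_breg_right (h : (Fin d → ℝ) → ℝ) (gh : (Fin d → ℝ) → Fin d → ℝ)
    (u v w : Fin d → ℝ) :
    breg h gh u w - breg h gh v w = dotd (gh u - gh w) (u - v) - breg h gh v u := by
  simp only [breg, dotd_sub, sub_dotd]
  ring

theorem breg_add_breg_swap (h : (Fin d → ℝ) → ℝ) (gh : (Fin d → ℝ) → Fin d → ℝ)
    (u v : Fin d → ℝ) :
    breg h gh u v + breg h gh v u = dotd (gh u - gh v) (u - v) := by
  simp only [breg, dotd_sub, sub_dotd]
  ring

theorem IsNorm.sq_le_dotd_grad_sub (hN : IsNorm N)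
    (hsc : ∀ u ∈ X, ∀ v ∈ X, (1 / 2) * N (u - v) ^ 2 ≤ breg h gh u v)
    {u v : Fin d → ℝ} (hu : u ∈ X) (hv : v ∈ X) :
    N (u - v) ^ 2 ≤ dotd (gh u - gh v) (u - v) := by
  have huv := hsc u hu v hv
  have hvu := hsc v hv u hu
  rw [hN.map_sub_rev v u] at hvu
  linarith [breg_add_breg_swap h gh u v]

theorem IsNorm.one_le_lipschitz_of_nontrivial (hN : IsNorm N) (hX : X.Nontrivial)
    (hsc : ∀ u ∈ X, ∀ v ∈ X, (1 / 2) * N (u - v) ^ 2 ≤ breg h gh u v)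
    (hLip : ∀ u ∈ X, ∀ v ∈ X, dualNorm N (gh u - gh v) ≤ L * N (u - v)) : 1 ≤ L := by
  obtain ⟨u, hu, v, hv, huv⟩ := hX
  have hpos : 0 < N (u - v) := hN.pos (sub_ne_zero.2 huv)
  have hsq : 1 * N (u - v) ^ 2 ≤ L * N (u - v) ^ 2 :=
    calc 1 * N (u - v) ^ 2 = N (u - v) ^ 2 := one_mul _
      _ ≤ dotd (gh u - gh v) (u - v) := hN.sq_le_dotd_grad_sub hsc hu hv
      _ ≤ dualNorm N (gh u - gh v) * N (u - v) := hN.dotd_le_dualNorm_mul _ _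
      _ ≤ L * N (u - v) * N (u - v) := mul_le_mul_of_nonneg_right (hLip u hu v hv) hpos.le
      _ = L * N (u - v) ^ 2 := by ring
  exact le_of_mul_le_mul_right hsq (pow_pos hpos 2)

end Bregman

section ProximalStep

theorem nonneg_of_forall_nonneg_add_mul {a c : ℝ}
    (h : ∀ t ∈ Set.Ioc (0 : ℝ) 1, 0 ≤ a + t * c) : 0 ≤ a := by
  have hlim : Filter.Tendsto (fun t : ℝ => a + t * c) (nhdsWithin 0 (Set.Ioi 0)) (nhds a) := by
    have hcont : Continuous fun t : ℝ => a + t * c := by fun_prop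
    simpa using (hcont.tendsto 0).mono_left nhdsWithin_le_nhds
  exact ge_of_tendsto hlim (Filter.mem_of_superset (Ioc_mem_nhdsGT one_pos) h)

variable {d : ℕ} {N : (Fin d → ℝ) → ℝ} {X : Set (Fin d → ℝ)} {h : (Fin d → ℝ) → ℝ}
  {gh : (Fin d → ℝ) → Fin d → ℝ} {L η ε : ℝ} {g x xp y : Fin d → ℝ}

theorem dotd_nonneg_of_isMinOn_of_breg_nonneg (hη : 0 < η)
    (hmin : IsMinOn (fun z => dotd g z + (1 / η) * breg h gh z x) X xp) (hy : y ∈ X)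
    (hbreg : 0 ≤ breg h gh xp y) :
    0 ≤ dotd (g + (1 / η) • (gh y - gh x)) (y - xp) := by
  have hmin_y : dotd g xp + (1 / η) * breg h gh xp x ≤ dotd g y + (1 / η) * breg h gh y x :=
    hmin hy
  have hdiff : (1 / η) * (breg h gh y x - breg h gh xp x)
      ≤ (1 / η) * dotd (gh y - gh x) (y - xp) := by
    rw [breg_sub_breg_right]
    exact mul_le_mul_of_nonneg_left (by linarith) (by positivity)
  rw [add_dotd, smul_dotd, dotd_sub g]
  linarith

theorem IsNorm.mem_proxSet_of_isMinOn (hN : IsNorm N) (hX : Convex ℝ X) (hη : 0 < η)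
    (hbreg : ∀ u ∈ X, ∀ v ∈ X, 0 ≤ breg h gh u v)
    (hLip : ∀ u ∈ X, ∀ v ∈ X, dualNorm N (gh u - gh v) ≤ L * N (u - v))
    (hxp : xp ∈ X) (hmin : IsMinOn (fun z => dotd g z + (1 / η) * breg h gh z x) X xp) :
    xp ∈ proxSet X g gh η 0 x := by
  refine ⟨hxp, fun y hy => ?_⟩
  rw [ge_iff_le, neg_zero]
  refine nonneg_of_forall_nonneg_add_mul (c := (1 / η) * (L * N (y - xp) ^ 2)) ?_
  rintro t ⟨ht, ht1⟩
  set z := xp + t • (y - xp)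
  have hzX : z ∈ X := hX.add_smul_sub_mem hxp hy ⟨ht.le, ht1⟩
  have hzxp : z - xp = t • (y - xp) := add_sub_cancel_left _ _
  have hvar_z : 0 ≤ dotd (g + (1 / η) • (gh z - gh x)) (y - xp) := by
    have hscaled := dotd_nonneg_of_isMinOn_of_breg_nonneg hη hmin hzX (hbreg xp hxp z hzX)
    rw [hzxp, dotd_smul] at hscaled
    exact nonneg_of_mul_nonneg_right hscaled ht
  have hgrad : dotd (gh z - gh xp) (y - xp) ≤ t * (L * N (y - xp) ^ 2) :=
    calc dotd (gh z - gh xp) (y - xp)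
        ≤ dualNorm N (gh z - gh xp) * N (y - xp) := hN.dotd_le_dualNorm_mul _ _
      _ ≤ L * N (z - xp) * N (y - xp) :=
        mul_le_mul_of_nonneg_right (hLip z hzX xp hxp) (hN.nonneg _)
      _ = t * (L * N (y - xp) ^ 2) := by rw [hzxp, hN.map_smul, abs_of_pos ht]; ring
  have hgrad_scaled := mul_le_mul_of_nonneg_left hgrad (one_div_pos.2 hη).le
  simp only [add_dotd, smul_dotd, sub_dotd] at hvar_z hgrad_scaled ⊢
  linarith

theorem IsNorm.sq_div_le_sub_of_mem_proxSet {f : (Fin d → ℝ) → ℝ} {β : ℝ} (hN : IsNorm N)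
    (hη : 0 < η) (hβη : β * η ≤ 1)
    (hsc : ∀ u ∈ X, ∀ v ∈ X, (1 / 2) * N (u - v) ^ 2 ≤ breg h gh u v)
    (hsmooth : f xp - f x - dotd g (xp - x) ≤ β / 2 * N (xp - x) ^ 2)
    (hx : x ∈ X) (hxp : xp ∈ proxSet X g gh η ε x) :
    1 / (2 * η) * N (xp - x) ^ 2 ≤ f x - f xp + ε := by
  have hvar := hxp.2 x hx
  have hmono : (1 / η) * N (xp - x) ^ 2 ≤ (1 / η) * dotd (gh xp - gh x) (xp - x) :=
    mul_le_mul_of_nonneg_left (hN.sq_le_dotd_grad_sub hsc hxp.1 hx) (one_div_pos.2 hη).le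
  have hcurv : β / 2 * N (xp - x) ^ 2 ≤ 1 / (2 * η) * N (xp - x) ^ 2 := by
    refine mul_le_mul_of_nonneg_right ?_ (sq_nonneg _)
    rw [div_le_div_iff₀ two_pos (by positivity)]
    linarith
  have hhalf : (1 / η) * N (xp - x) ^ 2 = 2 * (1 / (2 * η) * N (xp - x) ^ 2) := by
    field_simp
  rw [hhalf] at hmono
  simp only [add_dotd, smul_dotd, dotd_sub] at hvar hmono hsmooth
  linarith

theorem IsNorm.le_dotd_sub_of_mem_proxSet {D M : ℝ} (hN : IsNorm N) (hη : 0 < η) (hL : 1 ≤ L)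
    (hLip : dualNorm N (gh xp - gh x) ≤ L * N (xp - x)) (hD : N (y - xp) ≤ D)
    (hM : dualNorm N g ≤ M) (hxp : xp ∈ proxSet X g gh η ε x) (hy : y ∈ X) :
    -(ε + (1 / η) * ((D + η * M) * L * N (xp - x))) ≤ dotd g (y - x) := by
  have hvar := hxp.2 y hy
  have hstep_nonneg : 0 ≤ N (xp - x) := hN.nonneg _
  have hM_nonneg : 0 ≤ M := (hN.dualNorm_nonneg g).trans hM
  have hregularizer : dotd (gh xp - gh x) (y - xp) ≤ L * N (xp - x) * D :=
    (hN.dotd_le_dualNorm_mul _ _).trans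
      (mul_le_mul hLip hD (hN.nonneg _) (by positivity))
  have hgradient : dotd g (x - xp) ≤ L * (M * N (xp - x)) :=
    calc dotd g (x - xp) ≤ dualNorm N g * N (x - xp) := hN.dotd_le_dualNorm_mul _ _
      _ ≤ M * N (xp - x) := by
        rw [hN.map_sub_rev x xp]
        exact mul_le_mul_of_nonneg_right hM hstep_nonneg
      _ ≤ L * (M * N (xp - x)) := le_mul_of_one_le_left (by positivity) hL
  have hregularizer_scaled := mul_le_mul_of_nonneg_left hregularizer (one_div_pos.2 hη).le
  have hsplit : (1 / η) * ((D + η * M) * L * N (xp - x))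
      = (1 / η) * (L * N (xp - x) * D) + L * (M * N (xp - x)) := by
    field_simp
  rw [hsplit]
  simp only [add_dotd, smul_dotd, dotd_sub] at hvar hregularizer_scaled hgradient ⊢
  linarith

end ProximalStep

section Rate

theorem exists_le_telescope_div {a F : ℕ → ℝ} {K : ℕ} (hK : 0 < K)
    (h : ∀ k, 1 ≤ k → k ≤ K → a k ≤ F k - F (k + 1)) :
    ∃ k, 1 ≤ k ∧ k ≤ K ∧ a k ≤ (F 1 - F (K + 1)) / K := by
  have hsum : ∑ i ∈ Finset.range K, a (i + 1) ≤ ∑ _i ∈ Finset.range K, (F 1 - F (K + 1)) / K :=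
    calc ∑ i ∈ Finset.range K, a (i + 1)
        ≤ ∑ i ∈ Finset.range K, (F (i + 1) - F (i + 1 + 1)) :=
          Finset.sum_le_sum fun i hi => h (i + 1) (by omega) (Finset.mem_range.1 hi)
      _ = F 1 - F (K + 1) := Finset.sum_range_sub' (fun i => F (i + 1)) K
      _ = ∑ _i ∈ Finset.range K, (F 1 - F (K + 1)) / K := by
          rw [Finset.sum_const, Finset.card_range, nsmul_eq_mul, mul_div_cancel₀]
          exact_mod_cast hK.ne'
  obtain ⟨i, hi, hle⟩ := Finset.exists_le_of_sum_le (Finset.nonempty_range_iff.2 hK.ne') hsum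
  exact ⟨i + 1, by omega, Finset.mem_range.1 hi, hle⟩

theorem mul_le_sqrt_div_sqrt_of_mul_sq_le {c s Δ K : ℝ} (hc : 0 ≤ c) (hK : 0 ≤ K)
    (h : c * s ^ 2 ≤ Δ / K) : c * s ≤ √(c * Δ) / √K := by
  rw [← Real.sqrt_div' _ hK]
  refine Real.le_sqrt_of_sq_le ?_
  calc (c * s) ^ 2 = c * (c * s ^ 2) := by ring
    _ ≤ c * (Δ / K) := mul_le_mul_of_nonneg_left h hc
    _ = c * Δ / K := (mul_div_assoc _ _ _).symm

theorem mem_of_forall_succ_mem {α : Type*} {X : Set α} {x : ℕ → α} {K : ℕ} (hx1 : x 1 ∈ X)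
    (hstep : ∀ k, 1 ≤ k → k ≤ K → x (k + 1) ∈ X) {k : ℕ} (hk : 1 ≤ k) (hkK : k ≤ K + 1) :
    x k ∈ X := by
  obtain rfl | ⟨j, hj, rfl⟩ : k = 1 ∨ ∃ j, 1 ≤ j ∧ k = j + 1 := by
    rcases hk.eq_or_lt with h | h
    · exact .inl h.symm
    · exact .inr ⟨k - 1, by omega, by omega⟩
  · exact hx1
  · exact hstep j hj (by omega)

theorem exists_prox_step_sq_le {d : ℕ} {X : Set (Fin d → ℝ)}
    {f : (Fin d → ℝ) → ℝ} {gradf : (Fin d → ℝ) → Fin d → ℝ}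
    {N R : (Fin d → ℝ) → (Fin d → ℝ) → ℝ}
    {gradR : (Fin d → ℝ) → (Fin d → ℝ) → Fin d → ℝ}
    {β η ε : ℝ} {K : ℕ} {x : ℕ → Fin d → ℝ}
    (hbdd : BddBelow (f '' X)) (hN : ∀ y ∈ X, IsNorm (N y))
    (hsc : ∀ y ∈ X, ∀ u ∈ X, ∀ v ∈ X,
      (1 / 2) * N y (u - v) ^ 2 ≤ breg (R y) (gradR y) u v)
    (hsmooth : ∀ y ∈ X, ∀ z ∈ X,
      f z - f y - dotd (gradf y) (z - y) ≤ β / 2 * N y (z - y) ^ 2)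
    (hη : 0 < η) (hβη : β * η ≤ 1) (hK : 0 < K) (hx1 : x 1 ∈ X)
    (hprox : ∀ k, 1 ≤ k → k ≤ K →
      x (k + 1) ∈ proxSet X (gradf (x k)) (gradR (x k)) η ε (x k)) :
    ∃ k, 1 ≤ k ∧ k ≤ K ∧ 1 / (2 * η) * N (x k) (x (k + 1) - x k) ^ 2
      ≤ (f (x 1) - sInf (f '' X)) / K + ε := by
  have hmem : ∀ k, 1 ≤ k → k ≤ K + 1 → x k ∈ X := fun k =>
    mem_of_forall_succ_mem hx1 fun j hj hjK => (hprox j hj hjK).1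
  have hdescent : ∀ k, 1 ≤ k → k ≤ K →
      1 / (2 * η) * N (x k) (x (k + 1) - x k) ^ 2 - ε ≤ f (x k) - f (x (k + 1)) := by
    intro k hk hkK
    have hxk := hmem k hk (by omega)
    exact sub_le_iff_le_add.2 <| (hN _ hxk).sq_div_le_sub_of_mem_proxSet hη hβη (hsc _ hxk)
      (hsmooth _ hxk _ (hprox k hk hkK).1) hxk (hprox k hk hkK)
  obtain ⟨k, hk, hkK, hshort⟩ := exists_le_telescope_div (F := fun k => f (x k)) hK hdescent
  have hinf : sInf (f '' X) ≤ f (x (K + 1)) :=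
    csInf_le hbdd ⟨_, hmem (K + 1) (by omega) le_rfl, rfl⟩
  exact ⟨k, hk, hkK, sub_le_iff_le_add.1 (hshort.trans (by gcongr))⟩

end Rate

theorem prox_point_stationary_convergence_general {d : ℕ} {X : Set (Fin d → ℝ)}
    {f : (Fin d → ℝ) → ℝ} {gradf : (Fin d → ℝ) → Fin d → ℝ}
    {N R : (Fin d → ℝ) → (Fin d → ℝ) → ℝ}
    {gradR : (Fin d → ℝ) → (Fin d → ℝ) → Fin d → ℝ}
    {L D M β η : ℝ} {K : ℕ} {x : ℕ → Fin d → ℝ}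
    (hX : Convex ℝ X) (hbdd : BddBelow (f '' X)) (hN : ∀ y ∈ X, IsNorm (N y))
    (hsc : ∀ y ∈ X, ∀ u ∈ X, ∀ v ∈ X,
      (1 / 2) * N y (u - v) ^ 2 ≤ breg (R y) (gradR y) u v)
    (hLip : ∀ y ∈ X, ∀ u ∈ X, ∀ v ∈ X,
      dualNorm (N y) (gradR y u - gradR y v) ≤ L * N y (u - v))
    (hD : ∀ y ∈ X, ∀ u ∈ X, ∀ v ∈ X, N y (u - v) ≤ D)
    (hM : ∀ y ∈ X, dualNorm (N y) (gradf y) ≤ M)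
    (hsmooth : ∀ y ∈ X, ∀ z ∈ X,
      f z - f y - dotd (gradf y) (z - y) ≤ β / 2 * N y (z - y) ^ 2)
    (hη : 0 < η) (hβη : β * η ≤ 1) (hK : 0 < K) (hx1 : x 1 ∈ X)
    (hstep : ∀ k, 1 ≤ k → k ≤ K → x (k + 1) ∈ X ∧
      IsMinOn (fun y => dotd (gradf (x k)) y + (1 / η) * breg (R (x k)) (gradR (x k)) y (x k))
        X (x (k + 1))) :
    ∃ k, 1 ≤ k ∧ k ≤ K ∧ ∀ y ∈ X, dotd (gradf (x k)) (y - x k) ≥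
      -(2 * (D + η * M) * L * √(1 / (2 * η) * (f (x 1) - sInf (f '' X))) / √K) := by
  rcases X.subsingleton_or_nontrivial with hsub | hnontriv
  · refine ⟨1, le_rfl, hK, fun y hy => ?_⟩
    rw [hsub hy hx1, hsub.eq_singleton_of_mem hx1]
    simp [dotd_zero]
  have hL : 1 ≤ L :=
    (hN _ hx1).one_le_lipschitz_of_nontrivial hnontriv (hsc _ hx1) (hLip _ hx1)
  have hmem : ∀ k, 1 ≤ k → k ≤ K + 1 → x k ∈ X := fun k =>
    mem_of_forall_succ_mem hx1 fun j hj hjK => (hstep j hj hjK).1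
  have hprox : ∀ k, 1 ≤ k → k ≤ K →
      x (k + 1) ∈ proxSet X (gradf (x k)) (gradR (x k)) η 0 (x k) := by
    intro k hk hkK
    have hxk := hmem k hk (by omega)
    exact (hN _ hxk).mem_proxSet_of_isMinOn hX hη
      (fun u hu v hv => le_trans (by positivity) (hsc _ hxk u hu v hv)) (hLip _ hxk)
      (hstep k hk hkK).1 (hstep k hk hkK).2
  obtain ⟨k, hk, hkK, hshort⟩ := exists_prox_step_sq_le hbdd hN hsc hsmooth hη hβη hK hx1 hprox
  have hxk := hmem k hk (by omega)
  have hxk' := (hprox k hk hkK).1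
  have hlength : 1 / (2 * η) * N (x k) (x (k + 1) - x k)
      ≤ √(1 / (2 * η) * (f (x 1) - sInf (f '' X))) / √K :=
    mul_le_sqrt_div_sqrt_of_mul_sq_le (by positivity) K.cast_nonneg (by rwa [add_zero] at hshort)
  refine ⟨k, hk, hkK, fun y hy => le_trans (neg_le_neg ?_)
    ((hN _ hxk).le_dotd_sub_of_mem_proxSet hη hL (hLip _ hxk _ hxk' _ hxk)
      (hD _ hxk y hy _ hxk') (hM _ hxk) (hprox k hk hkK) hy)⟩
  have hD_nonneg : 0 ≤ D := ((hN _ hxk).nonneg _).trans (hD _ hxk _ hxk _ hxk)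
  have hM_nonneg : 0 ≤ M := ((hN _ hxk).dualNorm_nonneg _).trans (hM _ hxk)
  calc 0 + (1 / η) * ((D + η * M) * L * N (x k) (x (k + 1) - x k))
      = 2 * (D + η * M) * L * (1 / (2 * η) * N (x k) (x (k + 1) - x k)) := by field_simp; ring
    _ ≤ 2 * (D + η * M) * L * (√(1 / (2 * η) * (f (x 1) - sInf (f '' X))) / √K) := by gcongr
    _ = 2 * (D + η * M) * L * √(1 / (2 * η) * (f (x 1) - sInf (f '' X))) / √K :=
      (mul_div_assoc _ _ _).symm

/-- Theorem: convergence to a stationary point without VGD,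
for the exact Bregman proximal point method with local norms. -/
theorem prox_point_stationary_convergence (d : ℕ) (X : Set (Fin d → ℝ))
    (f : (Fin d → ℝ) → ℝ) (gradf : (Fin d → ℝ) → Fin d → ℝ)
    (N : (Fin d → ℝ) → (Fin d → ℝ) → ℝ)
    (R : (Fin d → ℝ) → (Fin d → ℝ) → ℝ)
    (gradR : (Fin d → ℝ) → (Fin d → ℝ) → Fin d → ℝ)
    (L D Mb beta eta : ℝ) (K : ℕ) (x : ℕ → Fin d → ℝ)
    (hX : Convex ℝ X) (hne : X.Nonempty) (hbdd : BddBelow (f '' X))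
    (hN : ∀ y ∈ X, IsNorm (N y))
    -- (i) local regularizers: 1-strong convexity and L-Lipschitz gradient
    (hsc : ∀ y ∈ X, ∀ u v, breg (R y) (gradR y) u v ≥ (1 / 2) * (N y (u - v)) ^ 2)
    (hLip : ∀ y ∈ X, ∀ u v, dualNorm (N y) (gradR y u - gradR y v) ≤ L * N y (u - v))
    -- (ii) diameter and gradient bounds
    (hD : ∀ y ∈ X, ∀ u ∈ X, ∀ v ∈ X, N y (u - v) ≤ D)
    (hM : ∀ y ∈ X, dualNorm (N y) (gradf y) ≤ Mb)
    -- (iii) β-local smoothness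
    (hbeta : 0 < beta)
    (hsmooth : ∀ y ∈ X, ∀ z ∈ X,
      |f z - f y - dotd (gradf y) (z - y)| ≤ beta / 2 * (N y (z - y)) ^ 2)
    (heta : eta = 1 / (2 * beta))
    (hK : 0 < K) (hx1 : x 1 ∈ X)
    -- exact Bregman proximal point steps
    (hstep : ∀ k, 1 ≤ k → k ≤ K →
      x (k + 1) ∈ X ∧ ∀ y ∈ X,
        dotd (gradf (x k)) (x (k + 1)) +
            (1 / eta) * breg (R (x k)) (gradR (x k)) (x (k + 1)) (x k) ≤
          dotd (gradf (x k)) y + (1 / eta) * breg (R (x k)) (gradR (x k)) y (x k)) :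
    ∃ kstar, 1 ≤ kstar ∧ kstar ≤ K ∧ ∀ y ∈ X,
      dotd (gradf (x kstar)) (y - x kstar) ≥
        -(2 * (D + eta * Mb) * L *
            Real.sqrt (beta * (f (x 1) - sInf (f '' X))) / Real.sqrt K) := by
  have hbeta_eq : beta = 1 / (2 * eta) := by rw [heta]; field_simp
  have hgeneral := prox_point_stationary_convergence_general hX hbdd hN
    (fun y hy u _ v _ => hsc y hy u v) (fun y hy u _ v _ => hLip y hy u v) hD hM
    (fun y hy z hz => (le_abs_self _).trans (hsmooth y hy z hz))
    (by rw [heta]; positivity) (by rw [heta]; field_simp; norm_num) hK hx1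
    fun k hk hkK => ⟨(hstep k hk hkK).1, isMinOn_iff.2 (hstep k hk hkK).2⟩
  rwa [← hbeta_eq] at hgeneral
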